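/- (Fermionic realization of the short node of type B_n via a ghost field.) Let 𝒞 be the complex vector space with basis {a, a*, e} and symmetric bilinear form ⟨·,·⟩ determined by ⟨a, a*⟩ = ⟨a*, a⟩ = 1, ⟨e, e⟩ = −1, and all other pairings of basis vectors equal to 0 (a plays the role of ε_n, a* of ε_n*, and e is the ghost field). On the fermionic Fock space V of 𝒞, define for p ∈ ℤ the operators X₊(p) = √2 · T_{a, e}(p), X₋(p) = √2 · T_{e, a*}(p), and h(p) = T_{a, a*}(p). Then for all k, m ∈ ℤ: (i) [X₊(k), X₋(m)] = −2( h(k+m) + k δ_{k+m,0} · id_V ); (ii) [h(k), X₊(m)] = X₊(k+m) and [h(k), X₋(m)] = −X₋(k+m); (iii) [h(k), h(m)] = k δ_{k+m,0} · id_V. Thus X₊, X₋, h realize the MRY relations (R1)–(R3) for the short simple root α_n of the toroidal Lie algebra of type B_n (with (α_n|α_n) = 1) with the central element ¢ acting as the identity, i.e. at level one. -/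

import Mathlib

noncomputable section

variable (C : Type*) [AddCommGroup C] [Module ℂ C]

/-- `W = ⊕_{k ∈ ℤ_{≥0}+1/2} 𝒞^{(k)}`: the direct sum of copies of `𝒞`, the
copy indexed by `k : ℕ` standing for the half-integer `k + 1/2`; the element
of the `k`-th copy corresponding to `u : 𝒞` is the generator `u(-(k+1/2))`. -/
abbrev FockW := ℕ →₀ C

/-- The fermionic Fock space `V = Λ(W)`, the exterior algebra of `W`. -/
abbrev FockV := ExteriorAlgebra ℂ (FockW C)

/-- The creation operator `u(-(k+1/2))`: left exterior multiplication by the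
generator `u(-(k+1/2))`. -/
def create (u : C) (k : ℕ) : FockV C →ₗ[ℂ] FockV C :=
  LinearMap.mulLeft ℂ (ExteriorAlgebra.ι ℂ (Finsupp.single k u))

variable (B : C →ₗ[ℂ] C →ₗ[ℂ] ℂ)

/-- The annihilation operator `u(k+1/2)`: the unique odd derivation of `Λ(W)`
(the left contraction/interior product against the dual vector
`w ↦ ⟨u, w_k⟩`) sending the generator `v(-(l+1/2))` to `⟨u,v⟩ δ_{k,l} · 1`. -/
def annih (u : C) (k : ℕ) : FockV C →ₗ[ℂ] FockV C :=
  CliffordAlgebra.contractLeft ((B u).comp (Finsupp.lapply k))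

/-- The mode `u(m/2)` for an odd integer `m` (so that the half-integers
`m/2 ∈ ℤ + 1/2` are parametrized by odd `m : ℤ`): a creation operator if
`m/2 < 0`, an annihilation operator if `m/2 > 0`. -/
def fop (u : C) (m : ℤ) : FockV C →ₗ[ℂ] FockV C :=
  if m < 0 then create C u ((-m - 1) / 2).toNat else annih C B u ((m - 1) / 2).toNat

/-- The normal ordered product `:u(m/2) v(n/2):` for odd integers `m`, `n`:
it is `u(m/2)v(n/2)` if `m/2 < 0` and `−v(n/2)u(m/2)` if `m/2 > 0`. -/
def nord (u : C) (m : ℤ) (v : C) (n : ℤ) : FockV C →ₗ[ℂ] FockV C :=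
  if m < 0 then (fop C B u m).comp (fop C B v n)
  else -((fop C B v n).comp (fop C B u m))

/-- The normal-ordered quadratic operator
`T_{r₁,r₂}(p) = Σ_{k ∈ ℤ+1/2} :r₁(k) r₂(p−k):` applied to `x ∈ V`, the sum
running over the half-integers `k = j/2` with `j : ℤ` odd (on each vector of
`V` all but finitely many summands act as zero). -/
def Tq (r₁ r₂ : C) (p : ℤ) (x : FockV C) : FockV C :=
  ∑ᶠ (j : ℤ) (_ : Odd j), nord C B r₁ j r₂ (2 * p - j) x

end

noncomputable section

/-- `𝒞`: the complex vector space with basis `{a, a*, e}` (coordinates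
`0 ↦ a`, `1 ↦ a*`, `2 ↦ e`). -/
abbrev CC : Type := Fin 3 → ℂ

/-- `a` (playing the role of `ε_n`) -/
def va : CC := ![1, 0, 0]
/-- `a*` (playing the role of `ε_n*`) -/
def vastar : CC := ![0, 1, 0]
/-- the ghost field `e`, with `⟨e,e⟩ = −1` -/
def ve : CC := ![0, 0, 1]

/-- The symmetric bilinear form on `𝒞` with `⟨a,a*⟩ = ⟨a*,a⟩ = 1`,
`⟨e,e⟩ = −1`, and all other pairings of basis vectors zero. -/
def BC : CC →ₗ[ℂ] CC →ₗ[ℂ] ℂ :=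
  LinearMap.mk₂ ℂ (fun v w => v 0 * w 1 + v 1 * w 0 - v 2 * w 2)
    (fun v v' w => by simp only [Pi.add_apply]; ring)
    (fun c v w => by simp only [Pi.smul_apply, smul_eq_mul]; ring)
    (fun v w w' => by simp only [Pi.add_apply]; ring)
    (fun c v w => by simp only [Pi.smul_apply, smul_eq_mul]; ring)

/-- `X₊(p) = √2 · T_{a,e}(p)` -/
def Xplus (p : ℤ) (x : FockV CC) : FockV CC :=
  (Real.sqrt 2 : ℂ) • Tq CC BC va ve p x

/-- `X₋(p) = √2 · T_{e,a*}(p)` -/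
def Xminus (p : ℤ) (x : FockV CC) : FockV CC :=
  (Real.sqrt 2 : ℂ) • Tq CC BC ve vastar p x

/-- `h(p) = T_{a,a*}(p)` -/
def hOp (p : ℤ) (x : FockV CC) : FockV CC := Tq CC BC va vastar p x

end

/-!
The modes `u(i + 1/2)` satisfy the canonical anticommutation relations
`{u(i + 1/2), v(j + 1/2)} = ⟨u, v⟩ δ_{i+j+1,0}`, so `ad T_{r₁,r₂}(k)` maps a mode of `s` to a
combination of modes of `r₁` and `r₂` shifted by `k`. As `ad` is a derivation, applying it to the
summands of `T_{s₁,s₂}(m)` gives four quadratic operators; in two of them the factor ordered by the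
sign of its index has been shifted by `k`, and putting these back into normal order costs the
central term, a sum over `i` of `[i < 0] - [k + i < 0]`, which is `k`.

All infinite sums of operators are pointwise finite. They are treated as sums in the discrete
topology of the Fock space, which makes the `HasSum` calculus available.
-/

section OrderedMul

variable (R : Type*) {A : Type*} [CommRing R] [Ring A] [Algebra R A]

/-- The product of two odd elements `a`, `b`, in this order if `p` holds and in the opposite order
with the fermionic sign otherwise. Normal ordering of two modes is the case where `p` says that the
first mode is a creation operator. -/
def orderedMul (p : Prop) [Decidable p] : A →ₗ[R] A →ₗ[R] A :=
  if p then LinearMap.mul R A else -(LinearMap.mul R A).flip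

variable (p q : Prop) [Decidable p] [Decidable q] (a b c : A)

theorem orderedMul_apply : orderedMul R p a b = if p then a * b else -(b * a) := by
  unfold orderedMul
  split_ifs <;> rfl

theorem lie_orderedMul :
    ⁅c, orderedMul R p a b⁆ = orderedMul R p ⁅c, a⁆ b + orderedMul R p a ⁅c, b⁆ := by
  simp only [orderedMul_apply, Ring.lie_def]
  split_ifs <;> noncomm_ring

theorem orderedMul_eq_add_smul_anticommutator :
    orderedMul R p a b = orderedMul R q a b
      + ((if p then 1 else 0) - (if q then 1 else 0) : ℤ) • (a * b + b * a) := by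
  simp only [orderedMul_apply]
  split_ifs <;> simp

theorem orderedMul_not : orderedMul R (¬p) a b = -orderedMul R p b a := by
  simp only [orderedMul_apply]
  split_ifs <;> simp

variable {R a b c}

theorem lie_orderedMul_of_anticommutator_eq {α β : R} (ha : c * a + a * c = α • 1)
    (hb : c * b + b * c = β • 1) : ⁅c, orderedMul R p a b⁆ = α • b - β • a := by
  have hca : c * a = α • 1 - a * c := eq_sub_of_add_eq ha
  have hcb : c * b = β • 1 - b * c := eq_sub_of_add_eq hb
  rw [orderedMul_apply, Ring.lie_def]
  split_ifs
  · rw [← mul_assoc, hca, sub_mul, mul_assoc a c b, hcb]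
    simp only [smul_mul_assoc, mul_sub, mul_smul_comm, one_mul, mul_one, mul_assoc]
    abel
  · rw [mul_neg, ← mul_assoc, hcb, sub_mul, mul_assoc b c a, hca]
    simp only [smul_mul_assoc, mul_sub, mul_smul_comm, one_mul, mul_one, mul_assoc, neg_mul]
    abel

end OrderedMul

section DiscreteSums

variable {V : Type*} [AddCommGroup V] [TopologicalSpace V] [DiscreteTopology V]

theorem hasSum_lie_apply {R ι : Type*} [CommRing R] [Module R V] {A : ι → Module.End R V}
    {S : Module.End R V} (hA : ∀ x, HasSum (fun i ↦ A i x) (S x)) (D : Module.End R V) (x : V) :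
    HasSum (fun i ↦ ⁅D, A i⁆ x) (⁅D, S⁆ x) :=
  ((hA x).map D continuous_of_discreteTopology).sub (hA (D x))

theorem hasSum_step_sub_shifted_step_smul (k : ℤ) (y : V) :
    HasSum (fun i : ℤ ↦ ((if i < 0 then 1 else 0) - (if k + i < 0 then 1 else 0) : ℤ) • y)
      (k • y) := by
  induction k using Int.induction_on with
  | zero => simp
  | succ k ih =>
    convert ih.add (hasSum_ite_eq (-(k : ℤ) - 1) y) using 1
    · ext i
      split_ifs <;> first | omega | simp
    · rw [add_smul, one_smul]
  | pred k ih =>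
    convert ih.sub (hasSum_ite_eq (k : ℤ) y) using 1
    · ext i
      split_ifs <;> first | omega | simp
    · rw [sub_smul, one_smul]

end DiscreteSums

noncomputable section

namespace FockV

open Filter

variable {C : Type*} [AddCommGroup C] [Module ℂ C] (B : C →ₗ[ℂ] C →ₗ[ℂ] ℂ)

theorem create_mul_create_add_swap (u v : C) (k l : ℕ) :
    (create C u k * create C v l + create C v l * create C u k : Module.End ℂ (FockV C)) = 0 := by
  refine LinearMap.ext fun x ↦ ?_
  simp [create, ← mul_assoc, ← add_mul, ExteriorAlgebra.ι_add_mul_swap]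

theorem annih_mul_annih_add_swap (u v : C) (k l : ℕ) :
    (annih C B u k * annih C B v l + annih C B v l * annih C B u k : Module.End ℂ (FockV C)) = 0 :=
  LinearMap.ext fun x ↦ add_eq_zero_iff_eq_neg.mpr (CliffordAlgebra.contractLeft_comm _ _ x)

theorem annih_mul_create_add_swap (u v : C) (k l : ℕ) :
    (annih C B u k * create C v l + create C v l * annih C B u k : Module.End ℂ (FockV C))
      = (if k = l then B u v else 0) • 1 := by
  refine LinearMap.ext fun x ↦ ?_
  simp only [annih, create, ExteriorAlgebra.ι, LinearMap.add_apply, Module.End.mul_apply,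
    LinearMap.mulLeft_apply, CliffordAlgebra.contractLeft_ι_mul, LinearMap.coe_comp,
    Function.comp_apply, Finsupp.lapply_apply, Finsupp.single_apply, eq_comm, apply_ite (B u),
    map_zero, sub_add_cancel]
  split_ifs <;> rfl

theorem eventually_annih_eq_zero (u : C) (x : FockV C) : ∀ᶠ n in atTop, annih C B u n x = 0 := by
  induction x using CliffordAlgebra.left_induction with
  | algebraMap r => exact .of_forall fun n ↦ CliffordAlgebra.contractLeft_algebraMap (Q := 0) _ r
  | add x y hx hy =>
    filter_upwards [hx, hy] with n hxn hyn
    rw [map_add, hxn, hyn, add_zero]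
  | ι_mul x w hx =>
    have hw : ∀ᶠ n in atTop, w n = 0 := Nat.cofinite_eq_atTop ▸ w.hasFiniteSupport
    filter_upwards [hx, hw] with n hxn hwn
    simp only [annih] at hxn ⊢
    simp [CliffordAlgebra.contractLeft_ι_mul, hxn, hwn]

/-- The mode `u(i + 1/2)`: reindexes the half-integers, which `fop` encodes by odd integers, by all
of `ℤ`. -/
def mode (u : C) (i : ℤ) : Module.End ℂ (FockV C) := fop C B u (2 * i + 1)

variable {B}

theorem mode_of_neg (u : C) {i : ℤ} (hi : i < 0) : mode B u i = create C u (-i - 1).toNat := by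
  rw [mode, fop, if_pos (by omega)]
  congr 2
  omega

theorem mode_of_nonneg (u : C) {i : ℤ} (hi : 0 ≤ i) : mode B u i = annih C B u i.toNat := by
  rw [mode, fop, if_neg (by omega)]
  congr 2
  omega

variable (B) in
theorem eventually_mode_eq_zero (u : C) (x : FockV C) : ∀ᶠ i in atTop, mode B u i x = 0 := by
  have htoNat : Tendsto Int.toNat atTop atTop :=
    tendsto_atTop.mpr fun n ↦ (eventually_ge_atTop (n : ℤ)).mono fun i hi ↦ by omega
  filter_upwards [htoNat.eventually (eventually_annih_eq_zero B u x), eventually_ge_atTop 0]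
    with i hi hi0
  rwa [mode_of_nonneg u hi0]

theorem mode_mul_mode_add_swap (hB : B.IsSymm) (u v : C) (i j : ℤ) :
    mode B u i * mode B v j + mode B v j * mode B u i
      = (if i + j = -1 then B u v else 0) • 1 := by
  rcases lt_or_ge i 0 with hi | hi <;> rcases lt_or_ge j 0 with hj | hj
  · rw [mode_of_neg u hi, mode_of_neg v hj, create_mul_create_add_swap, if_neg (by omega),
      zero_smul]
  · have hij : j.toNat = (-i - 1).toNat ↔ i + j = -1 := by omega
    rw [mode_of_neg u hi, mode_of_nonneg v hj, add_comm, annih_mul_create_add_swap, ← hB.eq v u]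
    simp only [hij, RingHom.id_apply]
  · have hij : i.toNat = (-j - 1).toNat ↔ i + j = -1 := by omega
    rw [mode_of_nonneg u hi, mode_of_neg v hj, annih_mul_create_add_swap]
    simp only [hij]
  · rw [mode_of_nonneg u hi, mode_of_nonneg v hj, annih_mul_annih_add_swap, if_neg (by omega),
      zero_smul]

theorem nord_eq_orderedMul (u v : C) (i j : ℤ) :
    nord C B u (2 * i + 1) v (2 * j + 1) = orderedMul ℂ (i < 0) (mode B u i) (mode B v j) := by
  have hi : 2 * i + 1 < 0 ↔ i < 0 := by omega
  simp only [orderedMul_apply, nord, hi]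
  rfl

variable (B) in
theorem hasFiniteSupport_orderedMul_mode (u v : C) (p : ℤ) (x : FockV C) :
    (fun i : ℤ ↦ orderedMul ℂ (i < 0) (mode B u i) (mode B v (p - i)) x).HasFiniteSupport := by
  suffices ∀ᶠ i in cofinite, orderedMul ℂ (i < 0) (mode B u i) (mode B v (p - i)) x = 0 from this
  rw [Int.cofinite_eq, eventually_sup]
  constructor
  · have hsub : Tendsto (fun i ↦ p - i) atBot atTop := by
      simpa only [sub_eq_add_neg] using tendsto_atTop_add_const_left _ p tendsto_neg_atBot_atTop
    have hv := hsub.eventually (eventually_mode_eq_zero B v x)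
    filter_upwards [hv, eventually_lt_atBot 0] with i hvi hi
    simp [orderedMul_apply, hi, hvi]
  · filter_upwards [eventually_mode_eq_zero B u x, eventually_ge_atTop 0] with i hui hi
    simp [orderedMul_apply, hi.not_gt, hui]

variable (C) in
local instance discreteTopologicalSpace : TopologicalSpace (FockV C) := ⊥

local instance : DiscreteTopology (FockV C) := ⟨rfl⟩

variable (B) in
theorem hasSum_Tq (u v : C) (p : ℤ) (x : FockV C) :
    HasSum (fun i : ℤ ↦ orderedMul ℂ (i < 0) (mode B u i) (mode B v (p - 1 - i)) x)
      (Tq C B u v p x) := by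
  have hinj : Function.Injective fun i : ℤ ↦ 2 * i + 1 := fun i j h ↦ by
    simpa using h
  have hrange : Set.range (fun i : ℤ ↦ 2 * i + 1) = {j | Odd j} := by
    ext j
    simp only [Set.mem_range, Set.mem_ofPred_eq, Odd, eq_comm]
  have hTq : Tq C B u v p x
      = ∑ᶠ i : ℤ, orderedMul ℂ (i < 0) (mode B u i) (mode B v (p - 1 - i)) x := by
    calc Tq C B u v p x
      _ = ∑ᶠ j ∈ Set.range fun i : ℤ ↦ 2 * i + 1, nord C B u j v (2 * p - j) x := by
        rw [hrange]; rfl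
      _ = ∑ᶠ i : ℤ, nord C B u (2 * i + 1) v (2 * p - (2 * i + 1)) x := finsum_mem_range hinj
      _ = _ := finsum_congr fun i ↦ by
        rw [← nord_eq_orderedMul, show 2 * p - (2 * i + 1) = 2 * (p - 1 - i) + 1 by ring]
  have hfin := hasFiniteSupport_orderedMul_mode B u v (p - 1) x
  rw [hTq, ← tsum_eq_finsum (L := SummationFilter.unconditional ℤ) hfin]
  exact (summable_of_hasFiniteSupport hfin).hasSum

variable (B) in
/-- The quadratic operator `T_{u,v}(p)` as a linear endomorphism of the Fock space. -/
def quadratic (u v : C) (p : ℤ) : Module.End ℂ (FockV C) where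
  toFun := Tq C B u v p
  map_add' x y := (hasSum_Tq B u v p (x + y)).unique <| by
    simpa only [map_add] using (hasSum_Tq B u v p x).add (hasSum_Tq B u v p y)
  map_smul' c x := (hasSum_Tq B u v p (c • x)).unique <| by
    simpa only [map_smul, RingHom.id_apply] using (hasSum_Tq B u v p x).const_smul c

theorem lie_apply (S T : Module.End ℂ (FockV C)) (x : FockV C) :
    ⁅S, T⁆ x = S (T x) - T (S x) := rfl

variable (B) in
theorem hasSum_quadratic (u v : C) (p : ℤ) (x : FockV C) :
    HasSum (fun i : ℤ ↦ orderedMul ℂ (i < 0) (mode B u i) (mode B v (p - 1 - i)) x)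
      (quadratic B u v p x) :=
  hasSum_Tq B u v p x

theorem quadratic_swap (hB : B.IsSymm) (u v : C) (p : ℤ) :
    quadratic B v u p = -quadratic B u v p := by
  have hterm (i : ℤ) : orderedMul ℂ (p - 1 - i < 0) (mode B v (p - 1 - i)) (mode B u i)
      = -orderedMul ℂ (i < 0) (mode B u i) (mode B v (p - 1 - i)) := by
    rw [← orderedMul_not, orderedMul_eq_add_smul_anticommutator ℂ _ (¬i < 0),
      mode_mul_mode_add_swap hB]
    split_ifs <;> first | omega | simp
  refine LinearMap.ext fun x ↦ ?_
  refine ((Equiv.subLeft (p - 1)).hasSum_iff.mpr (hasSum_quadratic B v u p x)).unique ?_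
  simp only [Function.comp_def, Equiv.subLeft_apply, sub_sub_cancel, hterm, LinearMap.neg_apply]
  exact (hasSum_quadratic B u v p x).neg

theorem quadratic_self (hB : B.IsSymm) (u : C) (p : ℤ) : quadratic B u u p = 0 := by
  have htwo : (2 : ℂ) • quadratic B u u p = 0 := by
    rw [two_smul, ← eq_neg_iff_add_eq_zero]
    exact quadratic_swap hB u u p
  exact (smul_eq_zero_iff_right two_ne_zero).mp htwo

theorem lie_mode_quadratic (hB : B.IsSymm) (s r₁ r₂ : C) (n k : ℤ) :
    ⁅mode B s n, quadratic B r₁ r₂ k⁆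
      = B s r₁ • mode B r₂ (k + n) - B s r₂ • mode B r₁ (k + n) := by
  have hterm (i : ℤ) :
      ⁅mode B s n, orderedMul ℂ (i < 0) (mode B r₁ i) (mode B r₂ (k - 1 - i))⁆
        = (if i = -1 - n then B s r₁ • mode B r₂ (k + n) else 0)
          - if i = k + n then B s r₂ • mode B r₁ (k + n) else 0 := by
    rw [lie_orderedMul_of_anticommutator_eq _ (mode_mul_mode_add_swap hB s r₁ n i)
      (mode_mul_mode_add_swap hB s r₂ n (k - 1 - i)), ite_zero_smul, ite_zero_smul]
    congr 1
    · refine if_ctx_congr (by omega) (fun hi ↦ ?_) fun _ ↦ rfl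
      rw [hi]
      ring_nf
    · exact if_ctx_congr (by omega) (fun hi ↦ by rw [hi]) fun _ ↦ rfl
  refine LinearMap.ext fun x ↦ ?_
  refine (hasSum_lie_apply (hasSum_quadratic B r₁ r₂ k) _ x).unique ?_
  convert (hasSum_ite_eq (-1 - n) ((B s r₁ • mode B r₂ (k + n)) x)).sub
    (hasSum_ite_eq (k + n) ((B s r₂ • mode B r₁ (k + n)) x)) using 1
  · ext i
    rw [hterm]
    split_ifs <;> rfl
  · rfl

theorem lie_quadratic_mode (hB : B.IsSymm) (r₁ r₂ s : C) (k n : ℤ) :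
    ⁅quadratic B r₁ r₂ k, mode B s n⁆
      = B s r₂ • mode B r₁ (k + n) - B s r₁ • mode B r₂ (k + n) := by
  rw [Ring.lie_def, ← neg_sub, ← Ring.lie_def, lie_mode_quadratic hB, neg_sub]

theorem hasSum_orderedMul_shifted_mode (hB : B.IsSymm) (u v : C) (k m : ℤ) (x : FockV C) :
    HasSum (fun i : ℤ ↦ orderedMul ℂ (i < 0) (mode B u (k + i)) (mode B v (m - 1 - i)) x)
      (quadratic B u v (k + m) x + (k : ℂ) • (if k + m = 0 then B u v else 0) • x) := by
  have hsum := (Equiv.addLeft k).hasSum_iff.mpr (hasSum_quadratic B u v (k + m) x)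
  rw [Int.cast_smul_eq_zsmul]
  convert hsum.add (hasSum_step_sub_shifted_step_smul k ((if k + m = 0 then B u v else 0) • x))
    using 1
  ext i
  have hindex : k + m - 1 - (k + i) = m - 1 - i := by ring
  have hcentral : k + i + (m - 1 - i) = -1 ↔ k + m = 0 := by omega
  rw [orderedMul_eq_add_smul_anticommutator ℂ _ (k + i < 0), mode_mul_mode_add_swap hB]
  simp only [hcentral, Function.comp_apply, Equiv.coe_addLeft, hindex]
  rfl

theorem lie_quadratic_quadratic (hB : B.IsSymm) (r₁ r₂ s₁ s₂ : C) (k m : ℤ) :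
    ⁅quadratic B r₁ r₂ k, quadratic B s₁ s₂ m⁆
      = B s₁ r₂ • quadratic B r₁ s₂ (k + m) - B s₁ r₁ • quadratic B r₂ s₂ (k + m)
        + (B s₂ r₂ • quadratic B s₁ r₁ (k + m) - B s₂ r₁ • quadratic B s₁ r₂ (k + m))
        + (if k + m = 0 then k * (B s₁ r₂ * B r₁ s₂ - B s₁ r₁ * B r₂ s₂) else 0 : ℂ) • 1 := by
  refine LinearMap.ext fun x ↦ ?_
  refine (hasSum_lie_apply (hasSum_quadratic B s₁ s₂ m) _ x).unique ?_
  convert (((hasSum_orderedMul_shifted_mode hB r₁ s₂ k m x).const_smul (B s₁ r₂)).sub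
    ((hasSum_orderedMul_shifted_mode hB r₂ s₂ k m x).const_smul (B s₁ r₁))).add
    (((hasSum_quadratic B s₁ r₁ (k + m) x).const_smul (B s₂ r₂)).sub
    ((hasSum_quadratic B s₁ r₂ (k + m) x).const_smul (B s₂ r₁))) using 1
  · ext i
    rw [show k + m - 1 - i = k + (m - 1 - i) by ring, lie_orderedMul, lie_quadratic_mode hB,
      lie_quadratic_mode hB]
    simp
  · split_ifs
    · simp only [LinearMap.add_apply, LinearMap.sub_apply, LinearMap.smul_apply,
        Module.End.one_apply]
      module
    · simp

end FockV

theorem BC_apply (v w : CC) : BC v w = v 0 * w 1 + v 1 * w 0 - v 2 * w 2 := rfl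

theorem isSymm_BC : BC.IsSymm :=
  ⟨fun v w ↦ by simp only [BC_apply, RingHom.id_apply]; ring⟩

theorem Xplus_eq (p : ℤ) (x : FockV CC) :
    Xplus p x = (√2 : ℂ) • FockV.quadratic BC va ve p x := rfl

theorem Xminus_eq (p : ℤ) (x : FockV CC) :
    Xminus p x = (√2 : ℂ) • FockV.quadratic BC ve vastar p x := rfl

theorem hOp_eq (p : ℤ) (x : FockV CC) : hOp p x = FockV.quadratic BC va vastar p x := rfl

theorem lie_quadratic_va_ve_quadratic_ve_vastar (k m : ℤ) :
    ⁅FockV.quadratic BC va ve k, FockV.quadratic BC ve vastar m⁆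
      = -(FockV.quadratic BC va vastar (k + m) + (if k + m = 0 then (k : ℂ) else 0) • 1) := by
  rw [FockV.lie_quadratic_quadratic isSymm_BC, FockV.quadratic_self isSymm_BC]
  refine LinearMap.ext fun x ↦ ?_
  split_ifs <;> simp [BC_apply, va, ve, vastar, add_comm]

theorem lie_quadratic_va_vastar_quadratic_va_ve (k m : ℤ) :
    ⁅FockV.quadratic BC va vastar k, FockV.quadratic BC va ve m⁆
      = FockV.quadratic BC va ve (k + m) := by
  rw [FockV.lie_quadratic_quadratic isSymm_BC]
  simp [BC_apply, va, ve, vastar]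

theorem lie_quadratic_va_vastar_quadratic_ve_vastar (k m : ℤ) :
    ⁅FockV.quadratic BC va vastar k, FockV.quadratic BC ve vastar m⁆
      = -FockV.quadratic BC ve vastar (k + m) := by
  rw [FockV.lie_quadratic_quadratic isSymm_BC]
  simp [BC_apply, va, ve, vastar]

theorem lie_quadratic_va_vastar_self (k m : ℤ) :
    ⁅FockV.quadratic BC va vastar k, FockV.quadratic BC va vastar m⁆
      = (if k + m = 0 then (k : ℂ) else 0) • 1 := by
  rw [FockV.lie_quadratic_quadratic isSymm_BC]
  simp [BC_apply, va, vastar]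

end

/-- Fermionic realization of the short node of type `B_n` via a ghost field:
the operators `X₊(p) = √2 T_{a,e}(p)`, `X₋(p) = √2 T_{e,a*}(p)`,
`h(p) = T_{a,a*}(p)` satisfy, for all `k, m ∈ ℤ`,
(i) `[X₊(k), X₋(m)] = −2(h(k+m) + k δ_{k+m,0} · id_V)`;
(ii) `[h(k), X₊(m)] = X₊(k+m)` and `[h(k), X₋(m)] = −X₋(k+m)`;
(iii) `[h(k), h(m)] = k δ_{k+m,0} · id_V`;
i.e. the MRY relations (R1)–(R3) for the short simple root `α_n` of the
toroidal Lie algebra of type `B_n` (with `(α_n|α_n) = 1`), with the central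
element `¢` acting as the identity (level one). -/
theorem short_node_ghost_realization (k m : ℤ) (x : FockV CC) :
    (Xplus k (Xminus m x) - Xminus m (Xplus k x)
        = -((2 : ℂ) • (hOp (k + m) x + (if k + m = 0 then (k : ℂ) else 0) • x))) ∧
    (hOp k (Xplus m x) - Xplus m (hOp k x) = Xplus (k + m) x) ∧
    (hOp k (Xminus m x) - Xminus m (hOp k x) = -(Xminus (k + m) x)) ∧
    (hOp k (hOp m x) - hOp m (hOp k x) = (if k + m = 0 then (k : ℂ) else 0) • x) := by
  have hsqrt : (√2 : ℂ) * √2 = 2 := by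
    rw [← Complex.ofReal_mul, Real.mul_self_sqrt zero_le_two, Complex.ofReal_ofNat]
  simp only [Xplus_eq, Xminus_eq, hOp_eq, map_smul]
  refine ⟨?_, ?_, ?_, ?_⟩
  · rw [smul_smul, smul_smul, hsqrt, ← smul_sub, ← FockV.lie_apply,
      lie_quadratic_va_ve_quadratic_ve_vastar, LinearMap.neg_apply, smul_neg]
    rfl
  · rw [← smul_sub, ← FockV.lie_apply, lie_quadratic_va_vastar_quadratic_va_ve]
  · rw [← smul_sub, ← FockV.lie_apply, lie_quadratic_va_vastar_quadratic_ve_vastar,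
      LinearMap.neg_apply, smul_neg]
  · rw [← FockV.lie_apply, lie_quadratic_va_vastar_self]
    rfl
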